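/- For every positive integer d and every real c > 0 there is a constant C depending only on c and d such that: for every n and every degree-d polynomial threshold function f : ℝⁿ → {−1,1} in n variables, the Gaussian average sensitivity satisfies gas(f) ≤ C·n^{5/6+c}. -/

import Mathlib

open MeasureTheory ProbabilityTheory
open scoped ENNReal

/-- The standard Gaussian measure on `ℝⁿ`. -/
noncomputable def stdGaussian (n : ℕ) : Measure (Fin n → ℝ) :=
  Measure.pi fun _ => gaussianReal 0 1

/-- The sign function, with value `1` at `0`. -/
noncomputable def psign (r : ℝ) : ℝ := if 0 ≤ r then 1 else -1

/-- The Gaussian average sensitivity `gas(f) = ∑ᵢ Pr(f(X) ≠ f(X⁽ⁱ⁾))`, where `X` is a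
standard Gaussian on `ℝⁿ` and `X⁽ⁱ⁾` is obtained from `X` by replacing its `i`-th coordinate
by an independent standard normal. -/
noncomputable def gaussAvgSensitivity (n : ℕ) (f : (Fin n → ℝ) → ℝ) : ℝ :=
  ∑ i : Fin n,
    (((stdGaussian n).prod (gaussianReal 0 1))
      {xy | f xy.1 ≠ f (Function.update xy.1 i xy.2)}).toReal

/-!
Replacing `Xᵢ` by an independent copy `Yᵢ` is a quarter rotation of the Gaussian pair `(Xᵢ, Yᵢ)`.
Integrating the derivative along this rotation, which preserves the law of the pair, gives
`E |f(X⁽ⁱ⁾) - f(X)| ≤ (π / 2) E |Df(X)(Yᵢ eᵢ)|` for smooth `f`. For fixed `X` the variable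
`Df(X) Y` is a centred Gaussian of standard deviation `‖Df(X)‖₂`, so by Cauchy-Schwarz the sum of
the right-hand sides over `i` is at most `(π / 2) √n E |Df(X) Y|`.

Rotating all coordinates simultaneously, `2π E |Df(X) Y|` is the mean total variation of `f` along
the circles `t ↦ X cos t + Y sin t`. On such a circle a polynomial `p` of degree `d` is a
trigonometric polynomial of degree `d`, whose derivative has at most `2d` zeros unless it vanishes
identically; hence the sigmoid of `p` has total variation at most `2d`, whatever the scale of `p`.
Taking the sigmoid of `k² p + k` and letting `k → ∞` turns this into a bound for the sign of `p`.
-/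

open Set Filter Topology
open scoped Real Polynomial

section Variation

variable {f f' : ℝ → ℝ} {a b A B T : ℝ}

lemma integral_abs_deriv_le_of_ne_zero (hab : a ≤ b) (hf : ∀ t, HasDerivAt f (f' t) t)
    (hf' : Continuous f') (hAB : ∀ t, f t ∈ Icc A B) (hne : ∀ t ∈ Ioo a b, f' t ≠ 0) :
    ∫ t in a..b, |f' t| ≤ B - A := by
  have hint : ∫ t in a..b, f' t = f b - f a :=
    intervalIntegral.integral_eq_sub_of_hasDerivAt (fun t _ => hf t) (hf'.intervalIntegrable _ _)
  obtain ⟨hAa, haB⟩ := hAB a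
  obtain ⟨hAb, hbB⟩ := hAB b
  rcases hasDerivWithinAt_forall_lt_or_forall_gt_of_forall_ne (convex_Ioo a b)
    (fun t _ => (hf t).hasDerivWithinAt) hne with hneg | hpos
  · rw [intervalIntegral.integral_congr_Ioo_of_le hab fun t ht => abs_of_neg (hneg t ht),
      intervalIntegral.integral_neg, hint]
    linarith
  · rw [intervalIntegral.integral_congr_Ioo_of_le hab fun t ht => abs_of_pos (hpos t ht), hint]
    linarith

lemma integral_abs_deriv_le_of_zeros_subset (hf : ∀ t, HasDerivAt f (f' t) t)
    (hf' : Continuous f') (hAB : ∀ t, f t ∈ Icc A B) (S : Finset ℝ) (hab : a ≤ b)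
    (hS : ∀ t ∈ Ioo a b, f' t = 0 → t ∈ S) :
    ∫ t in a..b, |f' t| ≤ (S.card + 1) * (B - A) := by
  have hAB' : A ≤ B := (hAB 0).1.trans (hAB 0).2
  induction S using Finset.induction_on_max generalizing b with
  | empty =>
    simpa using integral_abs_deriv_le_of_ne_zero hab hf hf' hAB fun t ht h0 => by
      simpa using hS t ht h0
  | insert z S hz ih =>
    have hcard : (insert z S).card = S.card + 1 :=
      Finset.card_insert_of_notMem fun h => lt_irrefl z (hz z h)
    push_cast [hcard]
    by_cases hzab : z ∈ Ioo a b
    · have hleft : ∫ t in a..z, |f' t| ≤ (S.card + 1) * (B - A) :=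
        ih hzab.1.le fun t ht h0 =>
          (Finset.mem_insert.1 (hS t ⟨ht.1, ht.2.trans hzab.2⟩ h0)).resolve_left ht.2.ne
      have hright : ∫ t in z..b, |f' t| ≤ B - A :=
        integral_abs_deriv_le_of_ne_zero hzab.2.le hf hf' hAB fun t ht h0 => by
          rcases Finset.mem_insert.1 (hS t ⟨hzab.1.trans ht.1, ht.2⟩ h0) with h | h
          · exact ht.1.ne' h
          · exact ht.1.not_gt (hz t h)
      rw [← intervalIntegral.integral_add_adjacent_intervals (b := z)
        (hf'.abs.intervalIntegrable _ _) (hf'.abs.intervalIntegrable _ _)]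
      linarith
    · have hrest := ih hab fun t ht h0 =>
        (Finset.mem_insert.1 (hS t ht h0)).resolve_left fun h => hzab (h ▸ ht)
      linarith

lemma integral_abs_deriv_le_of_periodic (hf : ∀ t, HasDerivAt f (f' t) t) (hf' : Continuous f')
    (hAB : ∀ t, f t ∈ Icc A B) (hT : 0 < T) (hper : Function.Periodic f T) {m : ℕ}
    (hm : ∀ a, {t ∈ Ico a (a + T) | f' t = 0}.encard ≤ m) :
    ∫ t in 0..T, |f' t| ≤ m * (B - A) := by
  -- Cutting the period at a critical point `z` saves the extra monotone piece.
  obtain ⟨z, -, hz⟩ : ∃ z ∈ Ioo 0 T, f' z = 0 :=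
    exists_hasDerivAt_eq_zero hT (fun t _ => (hf t).continuousAt.continuousWithinAt)
      hper.eq.symm fun t _ => hf t
  have hper' : Function.Periodic (fun t => |f' t|) T := fun t => by
    have hshift := (hf (t + T)).comp_add_const t T
    simp only [hper _] at hshift
    exact congrArg abs (hshift.unique (hf t))
  have hfin := finite_of_encard_le_coe (hm z)
  have hmem : z ∈ hfin.toFinset := by simpa [hz] using hT
  have hcard : ((hfin.toFinset.erase z).card : ℝ) + 1 ≤ m := by
    rw [← Nat.cast_add_one, Finset.card_erase_add_one hmem, Nat.cast_le, ← ENat.natCast_le_natCast,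
      ← hfin.encard_eq_coe_toFinset_card]
    exact hm z
  calc ∫ t in 0..T, |f' t| = ∫ t in z..z + T, |f' t| := by
        simpa using hper'.intervalIntegral_add_eq 0 z
    _ ≤ ((hfin.toFinset.erase z).card + 1) * (B - A) :=
        integral_abs_deriv_le_of_zeros_subset hf hf' hAB _ (by linarith) fun t ht h0 => by
          simp [ht.1.ne', ht.1.le, ht.2, h0]
    _ ≤ m * (B - A) := by
        gcongr
        linarith [(hAB 0).1, (hAB 0).2]

end Variation

/-- The real trigonometric polynomials of degree at most `d`. Multiplying
`∑_{|k| ≤ d} c_k e^{ikt}` by `e^{idt}` encodes one as an ordinary polynomial of degree at most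
`2 * d` in `e^{it}`. -/
def IsTrigPolynomial (d : ℕ) (φ : ℝ → ℝ) : Prop :=
  ∃ P : ℂ[X], P.natDegree ≤ 2 * d ∧
    ∀ t : ℝ, P.eval (Circle.exp t : ℂ) = (Circle.exp t : ℂ) ^ d * (φ t : ℂ)

namespace IsTrigPolynomial

variable {d e : ℕ} {φ ψ : ℝ → ℝ} {ι : Type*}

lemma mono (h : IsTrigPolynomial d φ) (hde : d ≤ e) : IsTrigPolynomial e φ := by
  obtain ⟨P, hdeg, hP⟩ := h
  refine ⟨Polynomial.X ^ (e - d) * P, ?_, fun t => ?_⟩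
  · refine Polynomial.natDegree_mul_le.trans ?_
    rw [Polynomial.natDegree_X_pow]
    omega
  · rw [Polynomial.eval_mul, Polynomial.eval_pow, Polynomial.eval_X, hP, ← mul_assoc, ← pow_add,
      Nat.sub_add_cancel hde]

lemma const (a : ℝ) : IsTrigPolynomial 0 fun _ => a :=
  ⟨Polynomial.C (a : ℂ), by simp, by simp⟩

lemma cos_mul_add_sin_mul (x y : ℝ) :
    IsTrigPolynomial 1 fun t => Real.cos t * x + Real.sin t * y := by
  refine ⟨Polynomial.C (((x : ℂ) - y * Complex.I) / 2) * Polynomial.X ^ 2 +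
    Polynomial.C (((x : ℂ) + y * Complex.I) / 2), ?_, fun t => ?_⟩
  · exact Polynomial.natDegree_add_C.trans_le (Polynomial.natDegree_C_mul_X_pow_le _ _)
  · simp only [Polynomial.eval_add, Polynomial.eval_mul, Polynomial.eval_C, Polynomial.eval_pow,
      Polynomial.eval_X, Circle.coe_exp, Complex.exp_mul_I]
    push_cast
    linear_combination
      (-((x : ℂ) + y * Complex.I) / 2) * Complex.cos_sq_add_sin_sq (t : ℂ) +
        (x * Complex.sin t ^ 2 / 2 - y * Complex.I * Complex.sin t ^ 2 / 2 -
          y * Complex.cos t * Complex.sin t) * Complex.I_sq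

lemma add (hφ : IsTrigPolynomial d φ) (hψ : IsTrigPolynomial d ψ) :
    IsTrigPolynomial d (φ + ψ) := by
  obtain ⟨P, hPdeg, hP⟩ := hφ
  obtain ⟨Q, hQdeg, hQ⟩ := hψ
  refine ⟨P + Q, Polynomial.natDegree_add_le_of_degree_le hPdeg hQdeg, fun t => ?_⟩
  rw [Polynomial.eval_add, hP, hQ, Pi.add_apply, Complex.ofReal_add, mul_add]

lemma mul (hφ : IsTrigPolynomial d φ) (hψ : IsTrigPolynomial e ψ) :
    IsTrigPolynomial (d + e) (φ * ψ) := by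
  obtain ⟨P, hPdeg, hP⟩ := hφ
  obtain ⟨Q, hQdeg, hQ⟩ := hψ
  refine ⟨P * Q, Polynomial.natDegree_mul_le.trans (by omega), fun t => ?_⟩
  rw [Polynomial.eval_mul, hP, hQ, Pi.mul_apply, Complex.ofReal_mul, pow_add, mul_mul_mul_comm]

lemma sum (s : Finset ι) {φ : ι → ℝ → ℝ} (h : ∀ i ∈ s, IsTrigPolynomial d (φ i)) :
    IsTrigPolynomial d (∑ i ∈ s, φ i) :=
  Finset.sum_induction φ _ (fun _ _ => add) ((const 0).mono d.zero_le) h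

lemma prod (s : Finset ι) {d : ι → ℕ} {φ : ι → ℝ → ℝ}
    (h : ∀ i ∈ s, IsTrigPolynomial (d i) (φ i)) :
    IsTrigPolynomial (∑ i ∈ s, d i) (∏ i ∈ s, φ i) := by
  classical
  induction s using Finset.induction_on with
  | empty => exact const 1
  | insert i s hi ih =>
    rw [Finset.sum_insert hi, Finset.prod_insert hi]
    exact (h i (Finset.mem_insert_self i s)).mul (ih fun j hj => h j (Finset.mem_insert_of_mem hj))

lemma pow (h : IsTrigPolynomial d φ) (k : ℕ) : IsTrigPolynomial (k * d) (φ ^ k) := by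
  simpa using prod (Finset.range k) fun _ _ => h

lemma eval_cos_mul_add_sin_mul {p : MvPolynomial ι ℝ} (hp : p.totalDegree ≤ d) (x y : ι → ℝ) :
    IsTrigPolynomial d
      fun t => MvPolynomial.eval (fun i => Real.cos t * x i + Real.sin t * y i) p := by
  have hterm : ∀ m ∈ p.support, IsTrigPolynomial d
      fun t => p.coeff m * ∏ i ∈ m.support, (Real.cos t * x i + Real.sin t * y i) ^ m i := by
    intro m hm
    have hmonomial := (const (p.coeff m)).mul
      (prod m.support fun i _ => (cos_mul_add_sin_mul (x i) (y i)).pow (m i))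
    have hdeg : 0 + ∑ i ∈ m.support, m i * 1 ≤ d := by
      simpa [Finsupp.sum] using (MvPolynomial.le_totalDegree hm).trans hp
    convert hmonomial.mono hdeg using 2 with t
    simp
  convert sum p.support hterm using 2 with t
  simp [MvPolynomial.eval_eq]

lemma exists_eq_re (h : IsTrigPolynomial d φ) : ∃ P : ℂ[X],
    φ = fun t => ((Circle.exp t : ℂ)⁻¹ ^ d * P.eval (Circle.exp t : ℂ)).re := by
  obtain ⟨P, -, hP⟩ := h
  refine ⟨P, funext fun t => ?_⟩
  rw [hP, ← mul_assoc, ← mul_pow, inv_mul_cancel₀ (Circle.coe_ne_zero _), one_pow, one_mul,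
    Complex.ofReal_re]

lemma contDiff (h : IsTrigPolynomial d φ) : ContDiff ℝ 1 φ := by
  obtain ⟨P, rfl⟩ := h.exists_eq_re
  have hexp : ContDiff ℝ 1 fun t => (Circle.exp t : ℂ) := by
    simp only [Circle.coe_exp]
    exact (Complex.ofRealCLM.contDiff.mul contDiff_const).cexp
  have hP : ContDiff ℝ 1 fun z : ℂ => P.eval z := by
    simpa using (P.contDiff_aeval (𝕜 := ℂ) 1).restrict_scalars ℝ
  exact Complex.reCLM.contDiff.comp
    (((hexp.inv fun t => Circle.coe_ne_zero _).pow d).mul (hP.comp hexp))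

lemma periodic (h : IsTrigPolynomial d φ) : Function.Periodic φ (2 * π) := by
  obtain ⟨P, rfl⟩ := h.exists_eq_re
  intro t
  simp only [Circle.periodic_exp t]

protected lemma deriv (h : IsTrigPolynomial d φ) : IsTrigPolynomial d (deriv φ) := by
  have hφ (t : ℝ) : HasDerivAt φ (deriv φ t) t :=
    (h.contDiff.differentiable one_ne_zero t).hasDerivAt
  obtain ⟨P, hdeg, hP⟩ := h
  have hderiv_deg : (Polynomial.X * Polynomial.derivative P).natDegree ≤ 2 * d := by
    refine Polynomial.natDegree_le_iff_coeff_eq_zero.2 fun k hk => ?_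
    cases k with
    | zero => simp
    | succ k => simp [Polynomial.coeff_derivative, Polynomial.coeff_eq_zero_of_natDegree_lt
        (hdeg.trans_lt hk)]
  refine ⟨Polynomial.C Complex.I *
    (Polynomial.X * Polynomial.derivative P - Polynomial.C (d : ℂ) * P), ?_, fun t => ?_⟩
  · refine (Polynomial.natDegree_C_mul_le _ _).trans
      (Polynomial.natDegree_sub_le_of_le hderiv_deg
        ((Polynomial.natDegree_C_mul_le _ _).trans hdeg) |>.trans_eq (max_self _))
  · have hexp : HasDerivAt (fun s => (Circle.exp s : ℂ)) (Circle.exp t * Complex.I) t := by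
      simpa using ((hasDerivAt_id t).ofReal_comp.mul_const Complex.I).cexp
    have hleft := (P.hasDerivAt _).comp t hexp
    have hright := (hexp.fun_pow d).mul (hφ t).ofReal_comp
    have heq := hleft.unique (hright.congr_of_eventuallyEq (Eventually.of_forall hP))
    have hpow : (d : ℂ) * Circle.exp t ^ (d - 1) * Circle.exp t = d * (Circle.exp t : ℂ) ^ d := by
      cases d <;> simp [pow_succ, mul_assoc]
    simp only [Polynomial.eval_mul, Polynomial.eval_sub, Polynomial.eval_C, Polynomial.eval_X, hP]
    linear_combination heq + Complex.I * φ t * hpow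

lemma encard_zeros_le (h : IsTrigPolynomial d φ) (h0 : φ ≠ 0) (a : ℝ) :
    {t ∈ Ico a (a + 2 * π) | φ t = 0}.encard ≤ (2 * d : ℕ) := by
  obtain ⟨P, hdeg, hP⟩ := h
  have hP0 : P ≠ 0 := by
    rintro rfl
    exact h0 (funext fun t => by simpa using (hP t).symm)
  have hmaps : MapsTo (fun t => (Circle.exp t : ℂ)) {t ∈ Ico a (a + 2 * π) | φ t = 0}
      P.roots.toFinset := fun t ht => by
    rw [Finset.mem_coe, Multiset.mem_toFinset, Polynomial.mem_roots hP0, Polynomial.IsRoot, hP,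
      ht.2, Complex.ofReal_zero, mul_zero]
  have hinj : InjOn (fun t => (Circle.exp t : ℂ)) {t ∈ Ico a (a + 2 * π) | φ t = 0} :=
    (Subtype.val_injective.comp_injOn (Circle.exp_injOn_Ico (by simp))).mono (sep_subset _ _)
  calc _ ≤ (P.roots.toFinset : Set ℂ).encard := encard_le_encard_of_injOn hmaps hinj
    _ = P.roots.toFinset.card := encard_coe_eq_coe_finsetCard _
    _ ≤ (2 * d : ℕ) := by
      exact_mod_cast (Multiset.toFinset_card_le _).trans ((Polynomial.card_roots' P).trans hdeg)

lemma integral_abs_deriv_sigmoid_le (h : IsTrigPolynomial d φ) :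
    ∫ t in 0..2 * π, |deriv (fun s => Real.sigmoid (φ s)) t| ≤ 2 * d := by
  have hderiv (t : ℝ) : HasDerivAt (fun s => Real.sigmoid (φ s))
      (Real.sigmoid (φ t) * (1 - Real.sigmoid (φ t)) * deriv φ t) t :=
    (Real.hasDerivAt_sigmoid (φ t)).comp t (h.contDiff.differentiable one_ne_zero t).hasDerivAt
  by_cases h0 : deriv φ = 0
  · simp [(hderiv _).deriv, h0]
  have hzero (t : ℝ) : deriv (fun s => Real.sigmoid (φ s)) t = 0 ↔ deriv φ t = 0 := by
    simp [(hderiv t).deriv, (Real.sigmoid_pos _).ne', (sub_pos.2 (Real.sigmoid_lt_one _)).ne']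
  have hcont : ContDiff ℝ 1 fun s => Real.sigmoid (φ s) :=
    (contDiff_sigmoid.of_le le_top).comp h.contDiff
  simpa using integral_abs_deriv_le_of_periodic (fun t => (hderiv t).differentiableAt.hasDerivAt)
    (hcont.continuous_deriv_one) (A := 0) (B := 1)
    (fun t => ⟨Real.sigmoid_nonneg _, Real.sigmoid_le_one _⟩) Real.two_pi_pos
    (h.periodic.comp Real.sigmoid) (m := 2 * d)
    fun a => by simpa only [hzero] using h.deriv.encard_zeros_le h0 a

end IsTrigPolynomial

section StdGaussian

variable {n : ℕ}

instance : IsProbabilityMeasure (stdGaussian n) :=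
  inferInstanceAs (IsProbabilityMeasure (Measure.pi fun _ => gaussianReal 0 1))

lemma map_stdGaussian_eq_gaussianReal (L : (Fin n → ℝ) →L[ℝ] ℝ) :
    (stdGaussian n).map L =
      gaussianReal 0 (‖L ∘L (EuclideanSpace.equiv (Fin n) ℝ).toContinuousLinearMap‖₊ ^ 2) := by
  have heuclidean : (stdGaussian n).map (WithLp.toLp 2) =
      ProbabilityTheory.stdGaussian (EuclideanSpace ℝ (Fin n)) := map_pi_eq_stdGaussian
  rw [← Real.toNNReal_coe (r := _ ^ 2), NNReal.coe_pow, coe_nnnorm, ← variance_dual_stdGaussian,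
    ← integral_strongDual_stdGaussian (L ∘L (EuclideanSpace.equiv (Fin n) ℝ).toContinuousLinearMap),
    ← IsGaussian.map_eq_gaussianReal, ← heuclidean, Measure.map_map (by fun_prop) (by fun_prop)]
  rfl

lemma lintegral_enorm_dual_stdGaussian (L : (Fin n → ℝ) →L[ℝ] ℝ) :
    ∫⁻ z, ‖L z‖ₑ ∂stdGaussian n =
      ‖L ∘L (EuclideanSpace.equiv (Fin n) ℝ).toContinuousLinearMap‖ₑ *
        ∫⁻ y, ‖y‖ₑ ∂gaussianReal 0 1 := by
  have hscale : (stdGaussian n).map L = (gaussianReal 0 1).map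
      (‖L ∘L (EuclideanSpace.equiv (Fin n) ℝ).toContinuousLinearMap‖ * ·) := by
    rw [map_stdGaussian_eq_gaussianReal, gaussianReal_map_const_mul, mul_zero, mul_one]
    rfl
  rw [← lintegral_map (f := (‖·‖ₑ)) (by fun_prop) (by fun_prop), hscale,
    lintegral_map (by fun_prop) (by fun_prop), ← lintegral_const_mul _ (by fun_prop)]
  simp only [enorm_mul, enorm_norm]

lemma lintegral_enorm_dual_single_stdGaussian (L : (Fin n → ℝ) →L[ℝ] ℝ) (i : Fin n) :
    ∫⁻ z, ‖L (Pi.single i (z i))‖ₑ ∂stdGaussian n =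
      ‖L (Pi.single i 1)‖ₑ * ∫⁻ y, ‖y‖ₑ ∂gaussianReal 0 1 := by
  have heval : MeasurePreserving (Function.eval i) (stdGaussian n) (gaussianReal 0 1) :=
    measurePreserving_eval _ i
  rw [← lintegral_const_mul _ (by fun_prop), ← heval.lintegral_comp (by fun_prop)]
  congr! 2 with z
  rw [← enorm_mul, mul_comm, ← smul_eq_mul, ← map_smul, ← Pi.single_smul, smul_eq_mul, mul_one]

lemma sum_enorm_dual_single_le (L : (Fin n → ℝ) →L[ℝ] ℝ) :
    ∑ i, ‖L (Pi.single i 1)‖ₑ ≤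
      ENNReal.ofReal √n * ‖L ∘L (EuclideanSpace.equiv (Fin n) ℝ).toContinuousLinearMap‖ₑ := by
  set L₂ := L ∘L (EuclideanSpace.equiv (Fin n) ℝ).toContinuousLinearMap
  have hnorm : ‖L₂‖ = √(∑ i, |L (Pi.single i 1)| ^ 2) := by
    rw [← Real.sqrt_sq (norm_nonneg L₂), (EuclideanSpace.basisFun (Fin n) ℝ).norm_dual]
    simp only [sq_abs, EuclideanSpace.basisFun_apply]
    rfl
  have hcs : ∑ i, |L (Pi.single i 1)| ≤ √n * ‖L₂‖ := by
    simpa [hnorm] using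
      Real.sum_mul_le_sqrt_mul_sqrt Finset.univ (fun _ => 1) fun i => |L (Pi.single i 1)|
  rw [← enorm_norm L₂, Real.enorm_of_nonneg (norm_nonneg L₂),
    ← ENNReal.ofReal_mul (Real.sqrt_nonneg _)]
  simp only [Real.enorm_eq_ofReal_abs]
  rw [← ENNReal.ofReal_sum_of_nonneg fun i _ => abs_nonneg _]
  exact ENNReal.ofReal_le_ofReal hcs

lemma sum_lintegral_enorm_dual_single_le (L : (Fin n → ℝ) →L[ℝ] ℝ) :
    ∑ i, ∫⁻ z, ‖L (Pi.single i (z i))‖ₑ ∂stdGaussian n ≤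
      ENNReal.ofReal √n * ∫⁻ z, ‖L z‖ₑ ∂stdGaussian n := by
  simp only [lintegral_enorm_dual_single_stdGaussian, lintegral_enorm_dual_stdGaussian]
  rw [← Finset.sum_mul, ← mul_assoc]
  gcongr
  exact sum_enorm_dual_single_le L

/-- The Gaussian rotation `(x, y) ↦ (x cos θ + y sin θ, -x sin θ + y cos θ)` of a pair of vectors,
taken in each coordinate with its own angle. Along `w = Pi.single i 1` it resamples the `i`-th
coordinate of `x`, and along `w = 1` it moves `x` on the circle through `x` and `y`. -/
noncomputable def pairRotation (θ : Fin n → ℝ) (q : (Fin n → ℝ) × (Fin n → ℝ)) :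
    (Fin n → ℝ) × (Fin n → ℝ) :=
  (fun i => Real.cos (θ i) * q.1 i + Real.sin (θ i) * q.2 i,
    fun i => -Real.sin (θ i) * q.1 i + Real.cos (θ i) * q.2 i)

lemma continuous_pairRotation_smul (w : Fin n → ℝ) (q : (Fin n → ℝ) × (Fin n → ℝ)) :
    Continuous fun t : ℝ => pairRotation (t • w) q := by
  unfold pairRotation
  fun_prop

lemma pairRotation_zero (q : (Fin n → ℝ) × (Fin n → ℝ)) : pairRotation 0 q = q := by
  simp [pairRotation]

lemma pairRotation_single_fst (i : Fin n) (q : (Fin n → ℝ) × (Fin n → ℝ)) :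
    (pairRotation ((π / 2) • Pi.single i 1) q).1 = Function.update q.1 i (q.2 i) := by
  ext j
  rcases eq_or_ne j i with rfl | hj <;> simp [pairRotation, *]

lemma hasDerivAt_pairRotation_smul_fst (w : Fin n → ℝ) (q : (Fin n → ℝ) × (Fin n → ℝ)) (t : ℝ) :
    HasDerivAt (fun s : ℝ => (pairRotation (s • w) q).1)
      (w * (pairRotation (t • w) q).2) t := by
  refine hasDerivAt_pi.2 fun i => ?_
  have hangle : HasDerivAt (fun s : ℝ => s * w i) (w i) t := hasDerivAt_mul_const (w i)
  refine ((hangle.cos.mul_const (q.1 i)).add (hangle.sin.mul_const (q.2 i))).congr_deriv ?_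
  simp only [pairRotation, Pi.mul_apply, Pi.smul_apply, smul_eq_mul]
  ring

lemma measurePreserving_pairRotation (θ : Fin n → ℝ) :
    MeasurePreserving (pairRotation θ) ((stdGaussian n).prod (stdGaussian n))
      ((stdGaussian n).prod (stdGaussian n)) := by
  have hcoord (i : Fin n) : MeasurePreserving
      (fun q : ℝ × ℝ => (Real.cos (θ i) * q.1 + Real.sin (θ i) * q.2,
        -Real.sin (θ i) * q.1 + Real.cos (θ i) * q.2))
      ((gaussianReal 0 1).prod (gaussianReal 0 1)) ((gaussianReal 0 1).prod (gaussianReal 0 1)) :=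
    ⟨by fun_prop, IsGaussian.map_rotation_eq_self (μ := gaussianReal 0 1) (by simp) (θ i)⟩
  have hzip := measurePreserving_arrowProdEquivProdArrow ℝ ℝ (Fin n)
    (fun _ => gaussianReal 0 1) (fun _ => gaussianReal 0 1)
  exact (hzip.comp (measurePreserving_pi _ _ hcoord)).comp (hzip.symm _)

lemma lintegral_lintegral_pairRotation {Φ : (Fin n → ℝ) × (Fin n → ℝ) → ℝ≥0∞}
    (hΦ : Measurable Φ) (w : Fin n → ℝ) (s : Set ℝ) :
    ∫⁻ q, (∫⁻ t in s, Φ (pairRotation (t • w) q)) ∂(stdGaussian n).prod (stdGaussian n) =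
      volume s * ∫⁻ q, Φ q ∂(stdGaussian n).prod (stdGaussian n) := by
  have hrot : Measurable fun r : ((Fin n → ℝ) × (Fin n → ℝ)) × ℝ => pairRotation (r.2 • w) r.1 := by
    unfold pairRotation
    fun_prop
  rw [lintegral_lintegral_swap (f := fun q t => Φ (pairRotation (t • w) q))
    (hΦ.comp hrot).aemeasurable]
  simp only [(measurePreserving_pairRotation _).lintegral_comp hΦ, lintegral_const,
    Measure.restrict_apply_univ, mul_comm]

lemma hasDerivAt_comp_pairRotation_smul_fst {f : (Fin n → ℝ) → ℝ} (hf : Differentiable ℝ f)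
    (w : Fin n → ℝ) (q : (Fin n → ℝ) × (Fin n → ℝ)) (t : ℝ) :
    HasDerivAt (fun s : ℝ => f (pairRotation (s • w) q).1)
      (fderiv ℝ f (pairRotation (t • w) q).1 (w * (pairRotation (t • w) q).2)) t :=
  (hf _).hasFDerivAt.comp_hasDerivAt t (hasDerivAt_pairRotation_smul_fst w q t)

lemma lintegral_enorm_update_sub_le {f : (Fin n → ℝ) → ℝ} (hf : ContDiff ℝ 1 f) (i : Fin n) :
    ∫⁻ q, ‖f (Function.update q.1 i (q.2 i)) - f q.1‖ₑ ∂(stdGaussian n).prod (stdGaussian n) ≤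
      ENNReal.ofReal (π / 2) *
        ∫⁻ q, ‖fderiv ℝ f q.1 (Pi.single i (q.2 i))‖ₑ ∂(stdGaussian n).prod (stdGaussian n) := by
  set w : Fin n → ℝ := Pi.single i 1
  have hcont : Continuous fun q : (Fin n → ℝ) × (Fin n → ℝ) => fderiv ℝ f q.1 (w * q.2) :=
    (hf.continuous_fderiv_apply one_ne_zero).comp
      (continuous_fst.prodMk (continuous_const.mul continuous_snd))
  have hw (q : (Fin n → ℝ) × (Fin n → ℝ)) : Pi.single i (q.2 i) = w * q.2 := by
    rw [← Pi.single_mul_left, one_mul]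
  have hpath (q : (Fin n → ℝ) × (Fin n → ℝ)) : f (Function.update q.1 i (q.2 i)) - f q.1 =
      ∫ t in 0..π / 2, fderiv ℝ f (pairRotation (t • w) q).1 (w * (pairRotation (t • w) q).2) := by
    rw [intervalIntegral.integral_eq_sub_of_hasDerivAt
      (fun t _ => hasDerivAt_comp_pairRotation_smul_fst (hf.differentiable one_ne_zero) w q t)
      ((hcont.comp (continuous_pairRotation_smul w q)).intervalIntegrable _ _),
      pairRotation_single_fst, zero_smul, pairRotation_zero]
  calc _ ≤ ∫⁻ q, (∫⁻ t in Ioc 0 (π / 2),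
          ‖fderiv ℝ f (pairRotation (t • w) q).1 (w * (pairRotation (t • w) q).2)‖ₑ)
            ∂(stdGaussian n).prod (stdGaussian n) := by
        gcongr with q
        rw [hpath, intervalIntegral.integral_of_le (by positivity)]
        exact enorm_integral_le_lintegral_enorm _
    _ = _ := by
        rw [lintegral_lintegral_pairRotation (Φ := fun q => ‖fderiv ℝ f q.1 (w * q.2)‖ₑ)
          hcont.enorm.measurable, Real.volume_Ioc, sub_zero]
        simp only [hw]

lemma sum_lintegral_enorm_update_sub_le {f : (Fin n → ℝ) → ℝ} (hf : ContDiff ℝ 1 f) :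
    ∑ i, ∫⁻ q, ‖f (Function.update q.1 i (q.2 i)) - f q.1‖ₑ
        ∂(stdGaussian n).prod (stdGaussian n) ≤
      ENNReal.ofReal (π / 2) * (ENNReal.ofReal √n *
        ∫⁻ q, ‖fderiv ℝ f q.1 q.2‖ₑ ∂(stdGaussian n).prod (stdGaussian n)) := by
  have hmeas {v : (Fin n → ℝ) × (Fin n → ℝ) → Fin n → ℝ} (hv : Continuous v) :
      Measurable fun q => ‖fderiv ℝ f q.1 (v q)‖ₑ :=
    ((hf.continuous_fderiv_apply one_ne_zero).comp (continuous_fst.prodMk hv)).enorm.measurable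
  have hmeas_single (i : Fin n) :
      Measurable fun q : (Fin n → ℝ) × (Fin n → ℝ) => ‖fderiv ℝ f q.1 (Pi.single i (q.2 i))‖ₑ :=
    hmeas ((continuous_single i).comp (by fun_prop))
  refine (Finset.sum_le_sum fun i _ => lintegral_enorm_update_sub_le hf i).trans ?_
  rw [← Finset.mul_sum]
  gcongr
  calc _ = ∫⁻ x, ∑ i, ∫⁻ y, ‖fderiv ℝ f x (Pi.single i (y i))‖ₑ ∂stdGaussian n ∂stdGaussian n := by
        rw [lintegral_finsetSum _ fun i _ => (hmeas_single i).lintegral_prod_right']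
        exact Finset.sum_congr rfl fun i _ => lintegral_prod _ (hmeas_single i).aemeasurable
    _ ≤ ∫⁻ x, ENNReal.ofReal √n * ∫⁻ y, ‖fderiv ℝ f x y‖ₑ ∂stdGaussian n ∂stdGaussian n := by
        gcongr with x
        exact sum_lintegral_enorm_dual_single_le _
    _ = _ := by
        rw [lintegral_const_mul' _ _ ENNReal.ofReal_ne_top,
          lintegral_prod _ (hmeas continuous_snd).aemeasurable]

lemma lintegral_enorm_fderiv_apply_le_of_circle {f : (Fin n → ℝ) → ℝ} (hf : ContDiff ℝ 1 f) {V : ℝ}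
    (hV : ∀ x y : Fin n → ℝ, ∫ t in 0..2 * π,
      |deriv (fun s => f fun i => Real.cos s * x i + Real.sin s * y i) t| ≤ V) :
    ∫⁻ q, ‖fderiv ℝ f q.1 q.2‖ₑ ∂(stdGaussian n).prod (stdGaussian n) ≤
      ENNReal.ofReal (V / (2 * π)) := by
  have hcont := hf.continuous_fderiv_apply one_ne_zero
  have hcircle (q : (Fin n → ℝ) × (Fin n → ℝ)) :
      ∫⁻ t in Ioc 0 (2 * π), ‖fderiv ℝ f (pairRotation (t • 1) q).1 (pairRotation (t • 1) q).2‖ₑ ≤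
        ENNReal.ofReal V := by
    set φ' : ℝ → ℝ := fun t => fderiv ℝ f (pairRotation (t • 1) q).1 (pairRotation (t • 1) q).2
    have hφ' : Continuous φ' := hcont.comp (continuous_pairRotation_smul 1 q)
    have hφ (t : ℝ) : HasDerivAt (fun s => f fun i => Real.cos s * q.1 i + Real.sin s * q.2 i)
        (φ' t) t := by
      simpa [pairRotation, φ'] using
        hasDerivAt_comp_pairRotation_smul_fst (hf.differentiable one_ne_zero) 1 q t
    have hle := hV q.1 q.2
    simp only [(hφ _).deriv] at hle
    rw [intervalIntegral.integral_of_le Real.two_pi_pos.le] at hle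
    rw [← ofReal_integral_norm_eq_lintegral_enorm
      (hφ'.integrableOn_Icc.mono_set Ioc_subset_Icc_self)]
    exact ENNReal.ofReal_le_ofReal hle
  have havg : ENNReal.ofReal (2 * π) *
      ∫⁻ q, ‖fderiv ℝ f q.1 q.2‖ₑ ∂(stdGaussian n).prod (stdGaussian n) ≤ ENNReal.ofReal V := by
    rw [← sub_zero (2 * π), ← Real.volume_Ioc, ← lintegral_lintegral_pairRotation
      (Φ := fun q => ‖fderiv ℝ f q.1 q.2‖ₑ) hcont.enorm.measurable 1]
    exact (lintegral_mono hcircle).trans_eq (by simp)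
  rwa [ENNReal.ofReal_div_of_pos Real.two_pi_pos,
    ENNReal.le_div_iff_mul_le (by simp [Real.pi_pos]) (by simp), mul_comm]

lemma sum_lintegral_enorm_sigmoid_sub_le {d : ℕ} {p : MvPolynomial (Fin n) ℝ}
    (hp : p.totalDegree ≤ d) :
    ∑ i, ∫⁻ q, ‖Real.sigmoid (MvPolynomial.eval (Function.update q.1 i (q.2 i)) p) -
        Real.sigmoid (MvPolynomial.eval q.1 p)‖ₑ ∂(stdGaussian n).prod (stdGaussian n) ≤
      ENNReal.ofReal (d / 2 * √n) := by
  have hf : ContDiff ℝ 1 fun x : Fin n → ℝ => Real.sigmoid (MvPolynomial.eval x p) :=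
    (contDiff_sigmoid.comp (AnalyticOnNhd.eval_mvPolynomial p).contDiff).of_le le_top
  have hvariation (x y : Fin n → ℝ) : ∫ t in 0..2 * π, |deriv (fun s => Real.sigmoid
      (MvPolynomial.eval (fun i => Real.cos s * x i + Real.sin s * y i) p)) t| ≤ 2 * d :=
    (IsTrigPolynomial.eval_cos_mul_add_sin_mul hp x y).integral_abs_deriv_sigmoid_le
  calc _ ≤ ENNReal.ofReal (π / 2) *
        (ENNReal.ofReal √n * ENNReal.ofReal (2 * d / (2 * π))) := by
        grw [sum_lintegral_enorm_update_sub_le hf,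
          lintegral_enorm_fderiv_apply_le_of_circle hf hvariation]
    _ = ENNReal.ofReal (d / 2 * √n) := by
        rw [← ENNReal.ofReal_mul (by positivity), ← ENNReal.ofReal_mul (by positivity)]
        congr 1
        field_simp

lemma stdGaussian_prod_gaussianReal_apply (i : Fin n) {S : Set ((Fin n → ℝ) × ℝ)}
    (hS : MeasurableSet S) :
    (stdGaussian n).prod (gaussianReal 0 1) S =
      (stdGaussian n).prod (stdGaussian n) (Prod.map id (Function.eval i) ⁻¹' S) := by
  have heval : MeasurePreserving (Function.eval i) (stdGaussian n) (gaussianReal 0 1) :=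
    measurePreserving_eval _ i
  exact (((MeasurePreserving.id _).prod heval).measure_preimage hS.nullMeasurableSet).symm

end StdGaussian

-- The shift by `k` sends the boundary case `s = 0` to `1`, in agreement with `psign 0 = 1`.
lemma tendsto_sigmoid_sq_mul_add (s : ℝ) :
    Tendsto (fun k : ℕ => Real.sigmoid (k ^ 2 * s + k)) atTop (𝓝 ((1 + psign s) / 2)) := by
  have hk : Tendsto (fun k : ℕ => (k : ℝ)) atTop atTop := tendsto_natCast_atTop_atTop
  unfold psign
  split_ifs with hs
  · have hlim : Tendsto (fun k : ℕ => (k : ℝ) ^ 2 * s + k) atTop atTop :=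
      tendsto_atTop_mono (fun k => le_add_of_nonneg_left (by positivity)) hk
    simpa [Function.comp_def] using Real.tendsto_sigmoid_atTop.comp hlim
  · have hlim : Tendsto (fun k : ℕ => (k : ℝ) * (k * s + 1)) atTop atBot :=
      hk.atTop_mul_atBot₀
        (tendsto_atBot_add_const_right _ _ (hk.atTop_mul_const_of_neg (not_le.1 hs)))
    simpa [Function.comp_def, mul_add, sq, mul_assoc] using Real.tendsto_sigmoid_atBot.comp hlim

lemma measurable_psign : Measurable psign :=
  Measurable.ite measurableSet_Ici measurable_const measurable_const

lemma tendsto_enorm_sigmoid_sub_sigmoid (a b : ℝ) :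
    Tendsto (fun k : ℕ => ‖Real.sigmoid (k ^ 2 * a + k) - Real.sigmoid (k ^ 2 * b + k)‖ₑ) atTop
      (𝓝 ({x | psign b ≠ psign x}.indicator 1 a)) := by
  convert ((tendsto_sigmoid_sq_mul_add a).sub (tendsto_sigmoid_sq_mul_add b)).enorm using 2
  unfold psign
  by_cases ha : 0 ≤ a <;> by_cases hb : 0 ≤ b <;> norm_num [indicator, ha, hb]

lemma sum_measure_le_of_tendsto_indicator {α ι : Type*} [Fintype ι] {mα : MeasurableSpace α}
    {μ : Measure α} {S : ι → Set α} (hS : ∀ i, MeasurableSet (S i)) {F : ℕ → ι → α → ℝ≥0∞}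
    (hF : ∀ k i, Measurable (F k i))
    (hlim : ∀ i x, Tendsto (F · i x) atTop (𝓝 ((S i).indicator 1 x))) {c : ℝ≥0∞}
    (hc : ∀ k, ∑ i, ∫⁻ x, F k i x ∂μ ≤ c) : ∑ i, μ (S i) ≤ c := by
  have hsum (x : α) : Tendsto (fun k => ∑ i, F k i x) atTop (𝓝 (∑ i, (S i).indicator 1 x)) :=
    tendsto_finsetSum _ fun i _ => hlim i x
  calc ∑ i, μ (S i) = ∫⁻ x, ∑ i, (S i).indicator 1 x ∂μ := by
        rw [lintegral_finsetSum _ fun i _ => measurable_one.indicator (hS i)]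
        simp only [lintegral_indicator_one (hS _)]
    _ = ∫⁻ x, liminf (fun k => ∑ i, F k i x) atTop ∂μ := by simp only [(hsum _).liminf_eq]
    _ ≤ liminf (fun k => ∫⁻ x, ∑ i, F k i x ∂μ) atTop :=
        lintegral_liminf_le fun k => Finset.measurable_fun_sum _ fun i _ => hF k i
    _ ≤ c := liminf_le_of_frequently_le' <| Frequently.of_forall fun k => by
        rw [lintegral_finsetSum _ fun i _ => hF k i]
        exact hc k

lemma sum_measure_psign_ne_le {n d : ℕ} {p : MvPolynomial (Fin n) ℝ} (hp : p.totalDegree ≤ d) :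
    ∑ i, (stdGaussian n).prod (gaussianReal 0 1)
      {xy | psign (MvPolynomial.eval xy.1 p) ≠
        psign (MvPolynomial.eval (Function.update xy.1 i xy.2) p)} ≤
      ENNReal.ofReal (d / 2 * √n) := by
  have heval : Continuous fun x : Fin n → ℝ => MvPolynomial.eval x p :=
    MvPolynomial.continuous_eval p
  have hS (i : Fin n) : MeasurableSet {xy : (Fin n → ℝ) × ℝ | psign (MvPolynomial.eval xy.1 p) ≠
      psign (MvPolynomial.eval (Function.update xy.1 i xy.2) p)} :=
    (measurableSet_eq_fun (measurable_psign.comp (heval.measurable.comp measurable_fst))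
      (measurable_psign.comp (heval.measurable.comp measurable_update'))).compl
  have hF (k : ℕ) (i : Fin n) : Measurable fun q : (Fin n → ℝ) × (Fin n → ℝ) =>
      ‖Real.sigmoid (k ^ 2 * MvPolynomial.eval (Function.update q.1 i (q.2 i)) p + k) -
        Real.sigmoid (k ^ 2 * MvPolynomial.eval q.1 p + k)‖ₑ := by
    have hupdate : Continuous fun q : (Fin n → ℝ) × (Fin n → ℝ) =>
        MvPolynomial.eval (Function.update q.1 i (q.2 i)) p :=
      heval.comp (continuous_fst.update i (by fun_prop))
    have hfst : Continuous fun q : (Fin n → ℝ) × (Fin n → ℝ) => MvPolynomial.eval q.1 p :=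
      heval.comp continuous_fst
    exact (((continuous_const.mul hupdate).add continuous_const).sigmoid.sub
      ((continuous_const.mul hfst).add continuous_const).sigmoid).enorm.measurable
  have hdeg (k : ℕ) :
      (MvPolynomial.C ((k : ℝ) ^ 2) * p + MvPolynomial.C (k : ℝ)).totalDegree ≤ d := by
    grw [MvPolynomial.totalDegree_add, MvPolynomial.totalDegree_mul, MvPolynomial.totalDegree_C,
      MvPolynomial.totalDegree_C, zero_add, hp]
    exact max_le le_rfl d.zero_le
  rw [Finset.sum_congr rfl fun i _ => stdGaussian_prod_gaussianReal_apply i (hS i)]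
  refine sum_measure_le_of_tendsto_indicator
    (fun i => (measurable_id.prodMap (measurable_pi_apply i)) (hS i)) hF
    (fun i q => tendsto_enorm_sigmoid_sub_sigmoid _ _) fun k => ?_
  simpa using sum_lintegral_enorm_sigmoid_sub_le (hdeg k)

theorem gaussian_average_sensitivity_bound_general {n d : ℕ} (p : MvPolynomial (Fin n) ℝ)
    (hp : p.totalDegree ≤ d) :
    gaussAvgSensitivity n (fun x => psign (MvPolynomial.eval x p)) ≤ d / 2 * √n := by
  unfold gaussAvgSensitivity
  rw [← ENNReal.toReal_sum fun i _ => measure_ne_top _ _]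
  exact ENNReal.toReal_le_of_le_ofReal (by positivity) (sum_measure_psign_ne_le hp)

lemma sqrt_natCast_le_rpow (n : ℕ) {s : ℝ} (hs : 1 / 2 ≤ s) : √n ≤ (n : ℝ) ^ s := by
  rcases n.eq_zero_or_pos with rfl | hn
  · simpa using Real.zero_rpow_nonneg s
  · rw [Real.sqrt_eq_rpow]
    exact Real.rpow_le_rpow_of_exponent_le (by exact_mod_cast hn) hs

/-- **Gaussian average sensitivity bound.**  For every positive integer `d` and `c > 0` there
is a constant `C` depending only on `c` and `d` such that every degree-`d` polynomial
threshold function in `n` variables satisfies `gas(f) ≤ C n^{5/6 + c}`. -/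
theorem gaussian_average_sensitivity_bound (d : ℕ) (hd : 0 < d) (c : ℝ) (hc : 0 < c) :
    ∃ C : ℝ, 0 < C ∧
      ∀ (n : ℕ) (p : MvPolynomial (Fin n) ℝ), p.totalDegree ≤ d →
        gaussAvgSensitivity n (fun x => psign (MvPolynomial.eval x p)) ≤
          C * (n : ℝ) ^ ((5 : ℝ) / 6 + c) := by
  refine ⟨d / 2, by positivity, fun n p hp => ?_⟩
  grw [gaussian_average_sensitivity_bound_general p hp,
    sqrt_natCast_le_rpow n (show 1 / 2 ≤ 5 / 6 + c by linarith)]
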